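/- Let α, β ∈ ℝ³ be unit vectors with angle φ = ∠(α,β) and αᵀβ ≥ 0. Then for x ∼ N(0, I₃), E[‖x‖² · 1{sign(αᵀx) ≠ sign(βᵀx)}] = O(φ): there is a universal constant C with E[‖x‖² 1{sign(αᵀx)≠sign(βᵀx)}] ≤ C φ. -/

import Mathlib

open MeasureTheory ProbabilityTheory Real
open scoped BigOperators Classical

/-- standard Gaussian measure `N(0, I_d)` on `ℝ^d` -/
noncomputable def stdG (d : ℕ) : Measure (Fin d → ℝ) :=
  Measure.pi fun _ => gaussianReal 0 1

/-!
The law of `x` is invariant under orthogonal maps, and remains so after reweighting by `‖x‖ ^ 2`.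
The mass of `{x | sign ⟪α, x⟫ ≠ sign ⟪β, x⟫}` can therefore be averaged over the reflections of the
plane of `α` and `β`. By Tonelli, the average is computed for each fixed `x` separately: as a
unit vector turns through an angle `π` in the plane, it spends an angle exactly `φ = ∠(α, β)` in
positions where it and its translate by `φ` lie on different sides of `xᗮ`. So the wedge carries
the fraction `φ / π` of the total mass, which for the weight `‖x‖ ^ 2` is the dimension.
-/

open Set InnerProductGeometry Module
open scoped ENNReal RealInnerProductSpace

section Sign

theorem sign_mul_of_pos {r : ℝ} (hr : 0 < r) (a : ℝ) : Real.sign (r * a) = Real.sign a := by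
  simp only [Real.sign, ← smul_eq_mul, smul_neg_iff_of_pos_left hr, smul_pos_iff_of_pos_left hr]

theorem sign_eq_sign_neg_iff {a : ℝ} : Real.sign a = Real.sign (-a) ↔ a = 0 := by
  rw [Real.sign_neg, CharZero.eq_neg_self_iff, Real.sign_eq_zero_iff]

theorem sign_ne_sign_iff_of_neg {a b : ℝ} (ha : a < 0) : Real.sign a ≠ Real.sign b ↔ 0 ≤ b := by
  rcases lt_trichotomy b 0 with hb | rfl | hb
  · simp [Real.sign_of_neg ha, Real.sign_of_neg hb, hb]
  · simp [Real.sign_of_neg ha]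
  · norm_num [Real.sign_of_neg ha, Real.sign_of_pos hb, hb.le]

@[fun_prop]
theorem measurable_real_sign : Measurable Real.sign :=
  Measurable.ite measurableSet_Iio measurable_const
    (Measurable.ite measurableSet_Ioi measurable_const measurable_const)

end Sign

section Circle

theorem volume_inter_Ioc_add_eq_of_periodic {A : Set ℝ} {T : ℝ} (hT : 0 < T)
    (hA : MeasurableSet A) (hAT : Function.Periodic (· ∈ A) T) (s t : ℝ) :
    volume (A ∩ Ioc s (s + T)) = volume (A ∩ Ioc t (t + T)) :=
  (isAddFundamentalDomain_Ioc hT s).measure_set_eq (isAddFundamentalDomain_Ioc hT t) hA fun g =>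
    Set.ext fun θ => iff_of_eq (hAT.map_vadd_zmultiples g θ)

theorem measurableSet_sign_cos_ne (φ : ℝ) :
    MeasurableSet {θ : ℝ | Real.sign (cos θ) ≠ Real.sign (cos (θ - φ))} :=
  (measurableSet_eq_fun (by fun_prop) (by fun_prop)).compl

theorem periodic_sign_cos_ne (φ : ℝ) :
    Function.Periodic (· ∈ {θ : ℝ | Real.sign (cos θ) ≠ Real.sign (cos (θ - φ))}) π := fun θ => by
  simp only [mem_ofPred_eq, add_sub_right_comm, cos_add_pi, Real.sign_neg, ne_eq, neg_inj]

theorem sign_cos_ne_sign_cos_sub_iff {φ θ : ℝ} (hφ₀ : 0 ≤ φ) (hφ : φ ≤ π)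
    (hθ : θ ∈ Ioo (π / 2) (π / 2 + π)) :
    Real.sign (cos θ) ≠ Real.sign (cos (θ - φ)) ↔ θ ≤ π / 2 + φ := by
  obtain ⟨hθ₁, hθ₂⟩ := hθ
  rw [sign_ne_sign_iff_of_neg (cos_neg_of_pi_div_two_lt_of_lt hθ₁ (by linarith))]
  constructor
  · contrapose!
    exact fun h => cos_neg_of_pi_div_two_lt_of_lt (by linarith) (by linarith)
  · exact fun h => cos_nonneg_of_neg_pi_div_two_le_of_le (by linarith) (by linarith)

theorem volume_sign_cos_ne_inter_Ioc {φ : ℝ} (hφ₀ : 0 ≤ φ) (hφ : φ ≤ π) (t : ℝ) :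
    volume ({θ | Real.sign (cos θ) ≠ Real.sign (cos (θ - φ))} ∩ Ioc t (t + π))
      = ENNReal.ofReal φ := by
  have hIoo : {θ | Real.sign (cos θ) ≠ Real.sign (cos (θ - φ))} ∩ Ioo (π / 2) (π / 2 + π)
      = Iic (π / 2 + φ) ∩ Ioo (π / 2) (π / 2 + π) :=
    Set.ext fun θ => and_congr_left fun hθ => sign_cos_ne_sign_cos_sub_iff hφ₀ hφ hθ
  calc
    _ = volume ({θ | Real.sign (cos θ) ≠ Real.sign (cos (θ - φ))} ∩ Ioc (π / 2) (π / 2 + π)) :=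
      volume_inter_Ioc_add_eq_of_periodic pi_pos (measurableSet_sign_cos_ne φ)
        (periodic_sign_cos_ne φ) t _
    _ = volume (Iic (π / 2 + φ) ∩ Ioc (π / 2) (π / 2 + π)) := by
      rw [← measure_congr (ae_eq_rfl.inter Ioo_ae_eq_Ioc), hIoo,
        measure_congr (ae_eq_rfl.inter Ioo_ae_eq_Ioc)]
    _ = ENNReal.ofReal φ := by
      rw [inter_comm, Ioc_inter_Iic, inf_eq_right.2 (by gcongr), Real.volume_Ioc,
        add_sub_cancel_left]

theorem exists_cos_mul_add_sin_mul_eq {a b : ℝ} (h : a ≠ 0 ∨ b ≠ 0) :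
    ∃ r > 0, ∃ ψ, ∀ θ, cos θ * a + sin θ * b = r * cos (θ - ψ) := by
  let z : ℂ := ⟨a, b⟩
  have hz : z ≠ 0 := fun hz =>
    h.elim (· (congrArg Complex.re hz)) (· (congrArg Complex.im hz))
  have hre : ‖z‖ * cos z.arg = a := Complex.norm_mul_cos_arg z
  have him : ‖z‖ * sin z.arg = b := Complex.norm_mul_sin_arg z
  refine ⟨‖z‖, norm_pos_iff.2 hz, z.arg, fun θ => ?_⟩
  rw [cos_sub, ← hre, ← him]
  ring

theorem volume_sign_cos_mul_add_sin_mul_ne_inter_Ioc {a b φ : ℝ} (h : a ≠ 0 ∨ b ≠ 0)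
    (hφ₀ : 0 ≤ φ) (hφ : φ ≤ π) :
    volume ({θ | Real.sign (cos θ * a + sin θ * b)
        ≠ Real.sign (cos (θ - φ) * a + sin (θ - φ) * b)} ∩ Ioc 0 π) = ENNReal.ofReal φ := by
  obtain ⟨r, hr, ψ, hψ⟩ := exists_cos_mul_add_sin_mul_eq h
  have hshift : {θ | Real.sign (cos θ * a + sin θ * b)
        ≠ Real.sign (cos (θ - φ) * a + sin (θ - φ) * b)} ∩ Ioc 0 π
      = (· - ψ) ⁻¹'
        ({θ | Real.sign (cos θ) ≠ Real.sign (cos (θ - φ))} ∩ Ioc (-ψ) (-ψ + π)) := by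
    ext θ
    simp only [hψ, sign_mul_of_pos hr, sub_right_comm θ φ ψ, mem_inter_iff, mem_ofPred_eq,
      mem_preimage, mem_Ioc, neg_lt_sub_iff_lt_add, sub_le_iff_le_add, neg_add_cancel_comm,
      lt_add_iff_pos_right]
  rw [hshift, (measurePreserving_sub_right volume ψ).measure_preimage
    ((measurableSet_sign_cos_ne φ).inter measurableSet_Ioc).nullMeasurableSet,
    volume_sign_cos_ne_inter_Ioc hφ₀ hφ]

end Circle

section Plane

variable {E : Type*} [NormedAddCommGroup E] [InnerProductSpace ℝ E] {u v : E}

/-- For an orthonormal pair `u, v`, the unit vector at angle `θ` from `u`, towards `v`, in the plane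
they span. -/
noncomputable def planeVector (u v : E) (θ : ℝ) : E := cos θ • u + sin θ • v

theorem inner_planeVector_left (u v x : E) (θ : ℝ) :
    ⟪planeVector u v θ, x⟫ = cos θ * ⟪u, x⟫ + sin θ * ⟪v, x⟫ := by
  simp only [planeVector, inner_add_left, real_inner_smul_left]

@[simp]
theorem planeVector_zero (u v : E) : planeVector u v 0 = u := by
  simp [planeVector]

theorem inner_planeVector_planeVector (hu : ‖u‖ = 1) (hv : ‖v‖ = 1) (huv : ⟪u, v⟫ = 0)
    (θ t : ℝ) : ⟪planeVector u v θ, planeVector u v t⟫ = cos (θ - t) := by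
  simp only [planeVector, inner_add_left, inner_add_right, real_inner_smul_left,
    real_inner_smul_right, real_inner_self_eq_norm_sq, real_inner_comm u v, hu, hv, huv, cos_sub]
  ring

theorem norm_planeVector (hu : ‖u‖ = 1) (hv : ‖v‖ = 1) (huv : ⟪u, v⟫ = 0) (θ : ℝ) :
    ‖planeVector u v θ‖ = 1 := by
  rw [← sq_eq_sq₀ (norm_nonneg _) zero_le_one, ← real_inner_self_eq_norm_sq,
    inner_planeVector_planeVector hu hv huv, sub_self, cos_zero, one_pow]

theorem reflection_planeVector (hu : ‖u‖ = 1) (hv : ‖v‖ = 1) (huv : ⟪u, v⟫ = 0) (θ t : ℝ) :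
    (ℝ ∙ planeVector u v θ).reflection (planeVector u v t) = planeVector u v (2 * θ - t) := by
  have hcos : 2 * cos (θ - t) * cos θ - cos t = cos (2 * θ - t) := by
    rw [cos_sub, cos_sub, cos_two_mul, sin_two_mul]
    ring
  have hsin : 2 * cos (θ - t) * sin θ - sin t = sin (2 * θ - t) := by
    rw [cos_sub, sin_sub, cos_two_mul, sin_two_mul]
    linear_combination 2 * sin t * sin_sq_add_cos_sq θ
  rw [Submodule.reflection_singleton_apply, norm_planeVector hu hv huv,
    inner_planeVector_planeVector hu hv huv]
  simp only [planeVector, ← hcos, ← hsin, RCLike.ofReal_real_eq_id, id_eq, one_pow, div_one]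
  module

theorem exists_eq_planeVector_angle {α β : E} (hα : ‖α‖ = 1) (hβ : ‖β‖ = 1)
    (hsin : sin (angle α β) ≠ 0) :
    ∃ γ : E, ‖γ‖ = 1 ∧ ⟪α, γ⟫ = 0 ∧ β = planeVector α γ (angle α β) := by
  have hinner : ⟪α, β⟫ = cos (angle α β) := inner_eq_cos_angle_of_norm_eq_one hα hβ
  set φ := angle α β
  have hnorm : ‖β - cos φ • α‖ = sin φ := by
    rw [← sq_eq_sq₀ (norm_nonneg _) (sin_angle_nonneg α β), norm_sub_sq_real, norm_smul,
      real_inner_smul_right, real_inner_comm, hinner, hα, hβ, Real.norm_eq_abs, mul_one, sq_abs,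
      sin_sq]
    ring
  refine ⟨(sin φ)⁻¹ • (β - cos φ • α), ?_, ?_, ?_⟩
  · rw [norm_smul, hnorm, norm_inv, Real.norm_of_nonneg (sin_angle_nonneg α β),
      inv_mul_cancel₀ hsin]
  · rw [real_inner_smul_right, inner_sub_right, real_inner_smul_right, hinner,
      real_inner_self_eq_norm_sq, hα]
    ring
  · rw [planeVector, smul_inv_smul₀ hsin, add_sub_cancel]

end Plane

section SignDisagreement

variable {E : Type*} [NormedAddCommGroup E] [InnerProductSpace ℝ E]

/-- The double wedge of points at which the linear forms `⟪α, ·⟫` and `⟪β, ·⟫` have different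
signs, the sign of `0` being `0`. -/
def signDisagreement (α β : E) : Set E := {x | Real.sign ⟪α, x⟫ ≠ Real.sign ⟪β, x⟫}

theorem signDisagreement_self (α : E) : signDisagreement α α = ∅ := by
  simp [signDisagreement]

theorem signDisagreement_neg_right (α : E) : signDisagreement α (-α) = {x | ⟪α, x⟫ = 0}ᶜ := by
  simp only [signDisagreement, inner_neg_left, ne_eq, sign_eq_sign_neg_iff, compl_ofPred]

theorem signDisagreement_normalize {α β : E} (hα : α ≠ 0) (hβ : β ≠ 0) :
    signDisagreement (NormedSpace.normalize α) (NormedSpace.normalize β)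
      = signDisagreement α β := by
  simp only [signDisagreement, NormedSpace.normalize, real_inner_smul_left,
    sign_mul_of_pos (inv_pos.2 (norm_pos_iff.2 hα)),
    sign_mul_of_pos (inv_pos.2 (norm_pos_iff.2 hβ))]

theorem preimage_signDisagreement (U : E ≃ₗᵢ[ℝ] E) (α β : E) :
    U ⁻¹' signDisagreement (U α) (U β) = signDisagreement α β := by
  simp only [signDisagreement, preimage_ofPred_eq, LinearIsometryEquiv.inner_map_map]

variable [MeasurableSpace E] [BorelSpace E]

theorem measurableSet_signDisagreement (α β : E) : MeasurableSet (signDisagreement α β) :=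
  (measurableSet_eq_fun (by fun_prop) (by fun_prop)).compl

theorem measurableSet_signDisagreement_planeVector (u v : E) (φ : ℝ) :
    MeasurableSet {p : ℝ × E |
      p.2 ∈ signDisagreement (planeVector u v p.1) (planeVector u v (p.1 - φ))} := by
  simp only [signDisagreement, inner_planeVector_left, mem_ofPred_eq]
  exact (measurableSet_eq_fun (by fun_prop) (by fun_prop)).compl

end SignDisagreement

section OrthogonallyInvariant

variable {E : Type*} [NormedAddCommGroup E] [InnerProductSpace ℝ E] [MeasurableSpace E]
  {μ : Measure E}

/-- A measure on a real inner product space is orthogonally invariant if every surjective linear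
isometry preserves it. -/
def OrthogonallyInvariant (μ : Measure E) : Prop := ∀ U : E ≃ₗᵢ[ℝ] E, MeasurePreserving U μ μ

namespace OrthogonallyInvariant

variable [BorelSpace E]

theorem withDensity_norm (hμ : OrthogonallyInvariant μ) {f : ℝ → ℝ≥0∞} (hf : Measurable f) :
    OrthogonallyInvariant (μ.withDensity fun x => f ‖x‖) := fun U => by
  refine ⟨U.continuous.measurable, Measure.ext fun s hs => ?_⟩
  rw [Measure.map_apply U.continuous.measurable hs,
    withDensity_apply _ (U.continuous.measurable hs), withDensity_apply _ hs,
    ← (hμ U).setLIntegral_comp_preimage hs (by fun_prop)]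
  simp only [U.norm_map]

variable {u v α β : E}

theorem measure_signDisagreement_planeVector (hμ : OrthogonallyInvariant μ) (hu : ‖u‖ = 1)
    (hv : ‖v‖ = 1) (huv : ⟪u, v⟫ = 0) (θ φ : ℝ) :
    μ (signDisagreement (planeVector u v θ) (planeVector u v (θ - φ)))
      = μ (signDisagreement u (planeVector u v φ)) := by
  have hreflection (t : ℝ) :
      (ℝ ∙ planeVector u v (θ / 2)).reflection (planeVector u v t) = planeVector u v (θ - t) := by
    rw [reflection_planeVector hu hv huv, mul_div_cancel₀ θ two_ne_zero]
  rw [← preimage_signDisagreement (ℝ ∙ planeVector u v (θ / 2)).reflection u,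
    (hμ _).measure_preimage (measurableSet_signDisagreement _ _).nullMeasurableSet,
    hreflection, ← sub_zero θ, ← hreflection, planeVector_zero, sub_zero]

theorem ofReal_pi_mul_measure_signDisagreement_planeVector [SFinite μ]
    (hμ : OrthogonallyInvariant μ) (hu : ‖u‖ = 1) (hv : ‖v‖ = 1) (huv : ⟪u, v⟫ = 0)
    (hμu : μ {x | ⟪u, x⟫ = 0} = 0) {φ : ℝ} (hφ₀ : 0 ≤ φ) (hφ : φ ≤ π) :
    ENNReal.ofReal π * μ (signDisagreement u (planeVector u v φ))
      = ENNReal.ofReal φ * μ univ := by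
  let S : Set (ℝ × E) :=
    {p | p.2 ∈ signDisagreement (planeVector u v p.1) (planeVector u v (p.1 - φ))}
  have hS : MeasurableSet S := measurableSet_signDisagreement_planeVector u v φ
  have hslice : ∀ᵐ x ∂μ, volume.restrict (Ioc 0 π) ((·, x) ⁻¹' S) = ENNReal.ofReal φ := by
    filter_upwards [measure_eq_zero_iff_ae_notMem.1 hμu] with x hx
    rw [Measure.restrict_apply (measurable_prodMk_right hS),
      ← volume_sign_cos_mul_add_sin_mul_ne_inter_Ioc (b := ⟪v, x⟫) (Or.inl hx) hφ₀ hφ]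
    simp only [S, signDisagreement, inner_planeVector_left, preimage_ofPred_eq, mem_ofPred_eq]
  calc
    _ = ∫⁻ _ in Ioc 0 π, μ (signDisagreement u (planeVector u v φ)) := by
      rw [setLIntegral_const, Real.volume_Ioc, sub_zero, mul_comm]
    _ = ∫⁻ θ in Ioc 0 π, μ (Prod.mk θ ⁻¹' S) :=
      lintegral_congr fun θ => (hμ.measure_signDisagreement_planeVector hu hv huv θ φ).symm
    _ = ∫⁻ x, volume.restrict (Ioc 0 π) ((·, x) ⁻¹' S) ∂μ := by
      rw [← Measure.prod_apply hS, Measure.prod_apply_symm hS]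
    _ = ENNReal.ofReal φ * μ univ := by
      rw [lintegral_congr_ae hslice, lintegral_const]

theorem measure_signDisagreement_of_norm_eq_one [SFinite μ] (hμ : OrthogonallyInvariant μ)
    (hα : ‖α‖ = 1) (hβ : ‖β‖ = 1) (hμα : μ {x | ⟪α, x⟫ = 0} = 0) :
    μ (signDisagreement α β) = ENNReal.ofReal (angle α β / π) * μ univ := by
  by_cases hsin : sin (angle α β) = 0
  · rcases sin_eq_zero_iff_angle_eq_zero_or_angle_eq_pi.1 hsin with h | h
    · rw [h, ← eq_of_angle_eq_zero_of_norm_eq h (hα.trans hβ.symm), signDisagreement_self]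
      simp
    · have hneg : β = -α := by
        have hangle : angle α (-β) = 0 := by rw [angle_neg_right, h, sub_self]
        rw [eq_of_angle_eq_zero_of_norm_eq hangle (by rw [norm_neg, hα, hβ]), neg_neg]
      rw [h, hneg, signDisagreement_neg_right,
        measure_congr (ae_eq_univ.2 (by rwa [compl_compl])), div_self pi_ne_zero,
        ENNReal.ofReal_one, one_mul]
  · obtain ⟨γ, hγ, hαγ, hβγ⟩ := exists_eq_planeVector_angle hα hβ hsin
    have h := hμ.ofReal_pi_mul_measure_signDisagreement_planeVector hα hγ hαγ hμα
      (angle_nonneg α β) (angle_le_pi α β)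
    rw [← hβγ] at h
    rw [ENNReal.ofReal_div_of_pos pi_pos, ← ENNReal.mul_div_right_comm]
    exact (ENNReal.eq_div_iff (by simp [pi_pos]) ENNReal.ofReal_ne_top).2 h

theorem measure_signDisagreement [SFinite μ] (hμ : OrthogonallyInvariant μ)
    (hα : α ≠ 0) (hβ : β ≠ 0) (hμα : μ {x | ⟪α, x⟫ = 0} = 0) :
    μ (signDisagreement α β) = ENNReal.ofReal (angle α β / π) * μ univ := by
  rw [← signDisagreement_normalize hα hβ,
    hμ.measure_signDisagreement_of_norm_eq_one (NormedSpace.norm_normalize_eq_one_iff.2 hα)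
      (NormedSpace.norm_normalize_eq_one_iff.2 hβ), angle_normalize_left, angle_normalize_right]
  simpa [NormedSpace.normalize, real_inner_smul_left, hα] using hμα

theorem setLIntegral_norm_signDisagreement [SFinite μ] (hμ : OrthogonallyInvariant μ)
    (hα : α ≠ 0) (hβ : β ≠ 0) (hμα : μ {x | ⟪α, x⟫ = 0} = 0) {f : ℝ → ℝ≥0∞} (hf : Measurable f) :
    ∫⁻ x in signDisagreement α β, f ‖x‖ ∂μ
      = ENNReal.ofReal (angle α β / π) * ∫⁻ x, f ‖x‖ ∂μ := by
  rw [← withDensity_apply _ (measurableSet_signDisagreement α β),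
    (hμ.withDensity_norm hf).measure_signDisagreement hα hβ
      (withDensity_absolutelyContinuous _ _ hμα),
    withDensity_apply _ MeasurableSet.univ, Measure.restrict_univ]

theorem setIntegral_norm_signDisagreement [SFinite μ] (hμ : OrthogonallyInvariant μ)
    (hα : α ≠ 0) (hβ : β ≠ 0) (hμα : μ {x | ⟪α, x⟫ = 0} = 0) {f : ℝ → ℝ} (hf : Measurable f)
    (hf₀ : ∀ r, 0 ≤ f r) :
    ∫ x in signDisagreement α β, f ‖x‖ ∂μ = angle α β / π * ∫ x, f ‖x‖ ∂μ := by
  have hmeas : Measurable fun x : E => f ‖x‖ := by fun_prop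
  rw [integral_eq_lintegral_of_nonneg_ae (ae_of_all _ fun x => hf₀ _) hmeas.aestronglyMeasurable,
    integral_eq_lintegral_of_nonneg_ae (ae_of_all _ fun x => hf₀ _) hmeas.aestronglyMeasurable,
    hμ.setLIntegral_norm_signDisagreement hα hβ hμα hf.ennreal_ofReal, ENNReal.toReal_mul,
    ENNReal.toReal_ofReal (div_nonneg (angle_nonneg α β) pi_pos.le)]

end OrthogonallyInvariant

end OrthogonallyInvariant

section StdGaussian

variable {E : Type*} [NormedAddCommGroup E] [InnerProductSpace ℝ E] [FiniteDimensional ℝ E]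
  [MeasurableSpace E] [BorelSpace E]

theorem orthogonallyInvariant_stdGaussian : OrthogonallyInvariant (stdGaussian E) :=
  fun U => ⟨U.continuous.measurable, stdGaussian_map U⟩

theorem variance_inner_stdGaussian (α : E) :
    Var[fun x => ⟪α, x⟫; stdGaussian E] = ‖α‖ ^ 2 := by
  simpa using variance_dual_stdGaussian (innerSL ℝ α)

theorem integral_inner_stdGaussian (α : E) : ∫ x, ⟪α, x⟫ ∂stdGaussian E = 0 :=
  integral_strongDual_stdGaussian (innerSL ℝ α)

theorem measure_inner_eq_zero_stdGaussian {α : E} (hα : α ≠ 0) :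
    stdGaussian E {x | ⟪α, x⟫ = 0} = 0 := by
  have hvar : (Var[innerSL ℝ α; stdGaussian E]).toNNReal ≠ 0 := by
    rw [variance_dual_stdGaussian, innerSL_apply_norm]
    simpa using hα
  have := nullSingletonClass_gaussianReal (μ := (stdGaussian E)[innerSL ℝ α]) hvar
  have hmap : (stdGaussian E).map (innerSL ℝ α) {0} = 0 := by
    rw [IsGaussian.map_eq_gaussianReal, measure_singleton]
  rwa [Measure.map_apply (innerSL ℝ α).continuous.measurable (measurableSet_singleton 0)] at hmap

theorem integral_norm_sq_stdGaussian : ∫ x, ‖x‖ ^ 2 ∂stdGaussian E = finrank ℝ E := by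
  have hL2 (α : E) : MemLp (fun x => ⟪α, x⟫) 2 (stdGaussian E) :=
    (innerSL ℝ α).comp_memLp' IsGaussian.memLp_two_id
  have hsq (α : E) : ∫ x, ⟪α, x⟫ ^ 2 ∂stdGaussian E = ‖α‖ ^ 2 := by
    rw [← variance_inner_stdGaussian, variance_of_integral_eq_zero (hL2 α).aemeasurable
      (integral_inner_stdGaussian α)]
  let b := stdOrthonormalBasis ℝ E
  calc
    _ = ∑ i, ∫ x, ⟪b i, x⟫ ^ 2 ∂stdGaussian E := by
      simp only [← b.sum_sq_inner_right]
      exact integral_finsetSum _ fun i _ => (hL2 (b i)).integrable_sq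
    _ = finrank ℝ E := by simp [hsq]

theorem setIntegral_norm_sq_signDisagreement_stdGaussian {α β : E} (hα : α ≠ 0) (hβ : β ≠ 0) :
    ∫ x in signDisagreement α β, ‖x‖ ^ 2 ∂stdGaussian E = angle α β / π * finrank ℝ E := by
  rw [orthogonallyInvariant_stdGaussian.setIntegral_norm_signDisagreement hα hβ
    (measure_inner_eq_zero_stdGaussian hα) (f := (· ^ 2)) (by fun_prop) sq_nonneg,
    integral_norm_sq_stdGaussian]

end StdGaussian

section Coordinates

theorem inner_toLp_eq_sum {ι : Type*} [Fintype ι] (a b : ι → ℝ) :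
    ⟪WithLp.toLp 2 a, WithLp.toLp 2 b⟫ = ∑ j, a j * b j := by
  simp [PiLp.inner_apply, mul_comm]

theorem norm_toLp_eq_one {ι : Type*} [Fintype ι] {a : ι → ℝ} (ha : ∑ j, a j ^ 2 = 1) :
    ‖WithLp.toLp 2 a‖ = 1 := by
  simp [EuclideanSpace.norm_eq, ha]

theorem integral_comp_toLp_stdG (d : ℕ) (f : EuclideanSpace ℝ (Fin d) → ℝ) :
    ∫ x, f (WithLp.toLp 2 x) ∂stdG d = ∫ y, f y ∂stdGaussian (EuclideanSpace ℝ (Fin d)) := by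
  rw [← map_pi_eq_stdGaussian, stdG]
  exact ((MeasurableEquiv.toLp 2 (Fin d → ℝ)).measurableEmbedding.integral_map f).symm

theorem stmt10_general (d : ℕ) (α β : Fin d → ℝ) (hα : ∑ j, α j ^ 2 = 1)
    (hβ : ∑ j, β j ^ 2 = 1) :
    ∫ x, (if Real.sign (∑ j, α j * x j) ≠ Real.sign (∑ j, β j * x j)
        then ∑ j, x j ^ 2 else 0) ∂stdG d = d / π * arccos (∑ j, α j * β j) := by
  let a := WithLp.toLp 2 α
  let b := WithLp.toLp 2 β
  have ha : ‖a‖ = 1 := norm_toLp_eq_one hα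
  have hb : ‖b‖ = 1 := norm_toLp_eq_one hβ
  have hangle : angle a b = arccos (∑ j, α j * β j) := by
    rw [angle, ha, hb, mul_one, div_one, inner_toLp_eq_sum]
  calc
    _ = ∫ x, (signDisagreement a b).indicator (‖·‖ ^ 2) (WithLp.toLp 2 x) ∂stdG d := by
      simp only [indicator_apply, signDisagreement, mem_ofPred_eq, a, b, inner_toLp_eq_sum,
        EuclideanSpace.real_norm_sq_eq]
    _ = ∫ y in signDisagreement a b, ‖y‖ ^ 2 ∂stdGaussian _ := by
      rw [integral_comp_toLp_stdG, integral_indicator (measurableSet_signDisagreement a b)]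
    _ = angle a b / π * d := by
      rw [setIntegral_norm_sq_signDisagreement_stdGaussian (norm_ne_zero_iff.1 (ha ▸ one_ne_zero))
        (norm_ne_zero_iff.1 (hb ▸ one_ne_zero)), finrank_euclideanSpace_fin]
    _ = _ := by
      rw [hangle]
      ring

end Coordinates

theorem stmt10 : ∃ C : ℝ, 0 < C ∧ ∀ (α β : Fin 3 → ℝ),
    (∑ j, α j ^ 2) = 1 → (∑ j, β j ^ 2) = 1 → 0 ≤ ∑ j, α j * β j →
    (∫ x, (if Real.sign (∑ j, α j * x j) ≠ Real.sign (∑ j, β j * x j)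
            then (∑ j, x j ^ 2) else 0) ∂(stdG 3))
      ≤ C * Real.arccos (∑ j, α j * β j) := by
  refine ⟨3 / π, by positivity, fun α β hα hβ _ => ?_⟩
  exact_mod_cast (stmt10_general 3 α β hα hβ).le
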